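/- arXiv:math/0102209 — 5 statements merged into one kernel-verified Lean document; each statement's English description precedes it below -/
import Mathlib

section
/- Let w_1,…,w_p : ℝ^N → ℝ^N (p ≥ 2) be contracting similarities, i.e. ‖w_j(x) − w_j(y)‖ = λ_j‖x − y‖ with λ_j ∈ (0,1), and let s > 0 be the unique real number with Σ_{j=1}^p λ_j^s = 1. Then there exists a unique Borel probability measure μ on ℝ^N with compact support such that μ = Σ_{j=1}^p λ_j^s (w_j)_*μ, i.e. μ(A) = Σ_{j=1}^p λ_j^s μ(w_j^{-1}(A)) for every Borel set A ⊆ ℝ^N. -/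
open MeasureTheory

/-! Code the points of the attractor by infinite words: the maps act on `C(ℕ → ι, X)` by
`π ↦ (ω ↦ w (ω 0, π (ω 1, ω 2, …)))`, a contraction whose fixed point is the coding map. Since
the first letter of a Bernoulli word is independent of the shifted word, the coding map pushes the
Bernoulli measure to a stationary measure. Conversely, if `x` has a stationary law `μ`, then so
has the `n`-th iterate of the contraction started at the constant map `x` and evaluated at a random
word; as `n → ∞` this iterate forgets `x` and tends to the coding map, which identifies `μ`. -/

section GeneralLemmas

open Filter ProbabilityTheory
open scoped Topology ENNReal NNReal

theorem measurePreserving_of_ae_tendsto {Ω X κ : Type*} [MeasurableSpace Ω] [TopologicalSpace X]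
    [HasOuterApproxClosed X] [MeasurableSpace X] [BorelSpace X] {P : Measure Ω}
    [IsProbabilityMeasure P] {μ : Measure X} {l : Filter κ} [l.NeBot] [l.IsCountablyGenerated]
    {T : κ → Ω → X} {T' : Ω → X} (hT : ∀ k, MeasurePreserving (T k) P μ) (hT' : Measurable T')
    (hlim : ∀ᵐ ω ∂P, Tendsto (fun k => T k ω) l (𝓝 (T' ω))) : MeasurePreserving T' P μ := by
  obtain ⟨k₀⟩ := l.nonempty_of_neBot
  have hT'_lim := tendstoInDistribution_of_ae_tendsto (fun k => (hT k).aemeasurable)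
    hT'.aemeasurable hlim
  have hident (k : κ) : IdentDistrib (T k₀) (T k) P P :=
    ⟨(hT k₀).aemeasurable, (hT k).aemeasurable, (hT k₀).map_eq.trans (hT k).map_eq.symm⟩
  have hk₀_lim : TendstoInDistribution T l (T k₀) (fun _ => P) P :=
    tendstoInDistribution_of_identDistrib k₀ hident (hident k₀)
  exact ⟨hT', (tendstoInDistribution_unique T hT'_lim hk₀_lim).trans (hT k₀).map_eq⟩

theorem indepFun_head_tail_infinitePi {E : ℕ → Type*} [∀ n, MeasurableSpace (E n)]
    (ν : ∀ n, Measure (E n)) [∀ n, IsProbabilityMeasure (ν n)] :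
    IndepFun (fun ω : ∀ n, E n => ω 0) (fun ω n => ω (n + 1)) (Measure.infinitePi ν) := by
  have hindep := (iIndepFun_infinitePi (P := ν) (X := fun _ x => x) fun _ => measurable_id).iIndep
  have hdisj : Disjoint {0} (Set.range Nat.succ) := by simp
  have hhead_tail :=
    indep_iSup_of_disjoint (fun n => (measurable_pi_apply n).comap_le) hindep hdisj
  rw [iSup_singleton, iSup_range] at hhead_tail
  simpa only [IndepFun_iff_Indep, MeasurableSpace.pi, MeasurableSpace.comap_iSup,
    MeasurableSpace.comap_comp, Function.comp_def] using hhead_tail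

theorem measurePreserving_head_tail_infinitePi {E : ℕ → Type*} [∀ n, MeasurableSpace (E n)]
    (ν : ∀ n, Measure (E n)) [∀ n, IsProbabilityMeasure (ν n)] :
    MeasurePreserving (fun ω : ∀ n, E n => (ω 0, fun n => ω (n + 1))) (Measure.infinitePi ν)
      ((ν 0).prod (Measure.infinitePi fun n => ν (n + 1))) := by
  refine ⟨by fun_prop, ?_⟩
  rw [(indepFun_head_tail_infinitePi ν).map_prod_eq_prod_map_map
      (Measurable.aemeasurable (by fun_prop)) (Measurable.aemeasurable (by fun_prop)),
    Measure.infinitePi_map_eval, Measure.map_infinitePi_infinitePi_of_inj Nat.succ_injective]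

theorem map_sum_smul_dirac_prod {ι X Y : Type*} [Fintype ι] [MeasurableSpace ι]
    [MeasurableSpace X] [MeasurableSpace Y] (c : ι → ℝ≥0∞) (μ : Measure X) [SFinite μ]
    {f : ι × X → Y} (hf : Measurable f) :
    ((∑ j, c j • Measure.dirac j).prod μ).map f = ∑ j, c j • μ.map fun x => f (j, x) := by
  simp_rw [← Measure.sum_fintype, Measure.prod_sum_left, Measure.map_sum hf.aemeasurable,
    Measure.prod_smul_left, Measure.dirac_prod, Measure.map_smul,
    Measure.map_map hf measurable_prodMk_left, Function.comp_def]

theorem measurePreserving_sum_smul_dirac_prod_iff {ι X : Type*} [Fintype ι] [MeasurableSpace ι]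
    [MeasurableSpace X] {c : ι → ℝ≥0∞} {μ : Measure X} [SFinite μ] {f : ι × X → X}
    (hf : Measurable f) :
    MeasurePreserving f ((∑ j, c j • Measure.dirac j).prod μ) μ ↔
      μ = ∑ j, c j • μ.map fun x => f (j, x) := by
  rw [← map_sum_smul_dirac_prod c μ hf]
  exact ⟨fun h => h.map_eq.symm, fun h => ⟨hf, h.symm⟩⟩

theorem exists_lt_one_forall_lipschitzWith {ι X : Type*} [Finite ι] [EMetricSpace X]
    {K : ι → ℝ≥0} {w : ι → X → X} (hw : ∀ j, ContractingWith (K j) (w j)) :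
    ∃ r < 1, ∀ j, LipschitzWith r (w j) := by
  have := Fintype.ofFinite ι
  exact ⟨Finset.univ.sup K, (Finset.sup_lt_iff zero_lt_one).2 fun j _ => (hw j).1,
    fun j => (hw j).toLipschitzWith.weaken (Finset.le_sup (Finset.mem_univ j))⟩

instance instNonemptyContinuousMap {α X : Type*} [TopologicalSpace α] [TopologicalSpace X]
    [Nonempty X] : Nonempty C(α, X) :=
  ⟨.const α (Classical.arbitrary X)⟩

end GeneralLemmas

section CodingMap

open Filter
open scoped Topology NNReal

variable {ι X : Type*} [TopologicalSpace ι]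

/-- The action of a family of maps `w (j, ·)` on `X`-valued continuous functions of an infinite
word `ω`: apply the map named by the first letter of `ω` to the value at the shifted word. -/
def codingStep [TopologicalSpace X] (w : C(ι × X, X)) (π : C(ℕ → ι, X)) : C(ℕ → ι, X) where
  toFun ω := w (ω 0, π fun n => ω (n + 1))

variable [MetricSpace X] [CompactSpace ι] {K : ℝ≥0} {w : C(ι × X, X)}

theorem contractingWith_codingStep (hK : K < 1) (hw : ∀ j, LipschitzWith K fun x => w (j, x)) :
    ContractingWith K (codingStep w) := by
  refine ⟨hK, LipschitzWith.of_dist_le_mul fun π₁ π₂ => ?_⟩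
  rw [ContinuousMap.dist_le (by positivity)]
  intro ω
  exact ((hw (ω 0)).dist_le_mul _ _).trans (by gcongr; exact ContinuousMap.dist_apply_le_dist _)

variable [CompleteSpace X] [Nonempty X]

/-- The coding map of an iterated function system: it sends the infinite word `ω` to the limit of
`w (ω 0, w (ω 1, … w (ω n, x)))`, encoded as the fixed point of `codingStep w`. -/
noncomputable def codingMap (h : ContractingWith K (codingStep w)) : C(ℕ → ι, X) :=
  h.fixedPoint

theorem codingMap_apply (h : ContractingWith K (codingStep w)) (ω : ℕ → ι) :
    codingMap h ω = w (ω 0, codingMap h fun n => ω (n + 1)) :=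
  (DFunLike.congr_fun h.fixedPoint_isFixedPt ω).symm

theorem tendsto_iterate_codingStep (h : ContractingWith K (codingStep w)) (π : C(ℕ → ι, X))
    (ω : ℕ → ι) : Tendsto (fun n => (codingStep w)^[n] π ω) atTop (𝓝 (codingMap h ω)) :=
  ((continuous_eval_const ω).tendsto _).comp (h.tendsto_iterate_fixedPoint π)

end CodingMap

section Stationary

variable {ι X : Type*} [TopologicalSpace ι] [MeasurableSpace ι]
  {ν : Measure ι} [IsProbabilityMeasure ν] [MeasurableSpace X] {μ : Measure X}
  [IsProbabilityMeasure μ]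

theorem measurePreserving_iterate_codingStep_const [TopologicalSpace X] {w : C(ι × X, X)}
    (hμ : MeasurePreserving w (ν.prod μ) μ) (n : ℕ) :
    MeasurePreserving (fun q : (ℕ → ι) × X => (codingStep w)^[n] (.const _ q.2) q.1)
      ((Measure.infinitePi fun _ => ν).prod μ) μ := by
  induction n with
  | zero => exact measurePreserving_snd
  | succ n ih =>
    have hsplit := (measurePreserving_head_tail_infinitePi fun _ => ν).prod (.id μ)
    have hassoc := measurePreserving_prodAssoc ν (Measure.infinitePi fun _ : ℕ => ν) μ
    have hstep := hμ.comp (((MeasurePreserving.id ν).prod ih).comp (hassoc.comp hsplit))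
    simp only [Function.iterate_succ_apply']
    exact hstep

variable [SecondCountableTopology ι] [OpensMeasurableSpace ι] [CompactSpace ι]
  [MetricSpace X] [BorelSpace X] [CompleteSpace X] [Nonempty X]
  {K : NNReal} {w : C(ι × X, X)}

theorem measurePreserving_map_codingMap (h : ContractingWith K (codingStep w)) :
    MeasurePreserving w (ν.prod ((Measure.infinitePi fun _ => ν).map (codingMap h)))
      ((Measure.infinitePi fun _ => ν).map (codingMap h)) := by
  have hπ := (codingMap h).measurable.measurePreserving (Measure.infinitePi fun _ : ℕ => ν)
  have hsplit := ((MeasurePreserving.id ν).prod hπ).comp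
    (measurePreserving_head_tail_infinitePi fun _ => ν)
  rw [← hsplit.map_eq]
  refine MeasurePreserving.map_of_comp ?_ w.measurable hsplit.measurable
  convert hπ using 1
  exact funext fun ω => (codingMap_apply h ω).symm

theorem eq_map_codingMap_of_measurePreserving (h : ContractingWith K (codingStep w))
    (hμ : MeasurePreserving w (ν.prod μ) μ) :
    μ = (Measure.infinitePi fun _ => ν).map (codingMap h) := by
  set P := Measure.infinitePi fun _ : ℕ => ν
  have hlim : MeasurePreserving (fun q : (ℕ → ι) × X => codingMap h q.1) (P.prod μ) μ :=
    measurePreserving_of_ae_tendsto (measurePreserving_iterate_codingStep_const hμ)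
      ((codingMap h).measurable.comp measurable_fst)
      (.of_forall fun q => tendsto_iterate_codingStep h _ q.1)
  have hfst : MeasurePreserving Prod.fst (P.prod μ) P := measurePreserving_fst
  calc
    μ = (P.prod μ).map (fun q => codingMap h q.1) := hlim.map_eq.symm
    _ = ((P.prod μ).map Prod.fst).map (codingMap h) :=
      (Measure.map_map (codingMap h).measurable measurable_fst).symm
    _ = P.map (codingMap h) := by rw [hfst.map_eq]

theorem exists_measurePreserving_unique_of_lipschitzWith (ν : Measure ι) [IsProbabilityMeasure ν]
    (hK : K < 1) (hw : ∀ j, LipschitzWith K fun x => w (j, x)) :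
    ∃ μ : Measure X, IsProbabilityMeasure μ ∧ (∃ C : Set X, IsCompact C ∧ μ Cᶜ = 0) ∧
      MeasurePreserving w (ν.prod μ) μ ∧
      ∀ μ' : Measure X, IsProbabilityMeasure μ' → MeasurePreserving w (ν.prod μ') μ' → μ' = μ := by
  have h := contractingWith_codingStep hK hw
  refine ⟨(Measure.infinitePi fun _ => ν).map (codingMap h),
    Measure.isProbabilityMeasure_map (codingMap h).measurable.aemeasurable,
    ⟨Set.range (codingMap h), isCompact_range (codingMap h).continuous, ?_⟩,
    measurePreserving_map_codingMap h, fun μ' _ => eq_map_codingMap_of_measurePreserving h⟩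
  rw [Measure.map_apply (codingMap h).measurable
    (isCompact_range (codingMap h).continuous).measurableSet.compl]
  simp [Set.preimage_compl]

end Stationary

theorem stmt_7_general {ι X : Type*} [Fintype ι] [MetricSpace X] [CompleteSpace X] [Nonempty X]
    [MeasurableSpace X] [BorelSpace X] {K : ι → NNReal} {w : ι → X → X}
    (hw : ∀ j, ContractingWith (K j) (w j)) {c : ι → ENNReal} (hc : ∑ j, c j = 1) :
    ∃ μ : Measure X, IsProbabilityMeasure μ ∧ (∃ C : Set X, IsCompact C ∧ μ Cᶜ = 0) ∧
      μ = ∑ j, c j • μ.map (w j) ∧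
      ∀ μ' : Measure X, IsProbabilityMeasure μ' → μ' = ∑ j, c j • μ'.map (w j) → μ' = μ := by
  obtain ⟨r, hr, hlip⟩ := exists_lt_one_forall_lipschitzWith hw
  let _ : TopologicalSpace ι := ⊥
  have : DiscreteTopology ι := ⟨rfl⟩
  let _ : MeasurableSpace ι := ⊤
  have : BorelSpace ι := ⟨borel_eq_top_of_discrete.symm⟩
  let W : C(ι × X, X) :=
    ⟨fun q => w q.1 q.2, continuous_prod_of_discrete_left.2 fun j => (hlip j).continuous⟩
  let ν : Measure ι := ∑ j, c j • Measure.dirac j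
  have : IsProbabilityMeasure ν := ⟨by simpa [ν] using hc⟩
  obtain ⟨μ, hμ, hcompact, hinv, hunique⟩ :=
    exists_measurePreserving_unique_of_lipschitzWith (w := W) ν hr hlip
  exact ⟨μ, hμ, hcompact, (measurePreserving_sum_smul_dirac_prod_iff W.measurable).1 hinv,
    fun μ' hμ' h => hunique μ' hμ' ((measurePreserving_sum_smul_dirac_prod_iff W.measurable).2 h)⟩

/-- for contracting similarities `w_1,…,w_p` of `ℝ^N` (`p ≥ 2`) with ratios
`λ_j ∈ (0,1)` and the similarity dimension `s > 0` satisfying `Σ_j λ_j^s = 1`, there is a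
unique compactly supported Borel probability measure `μ` on `ℝ^N` with
`μ = Σ_{j=1}^p λ_j^s (w_j)_* μ`. -/
theorem stmt_7 (N p : ℕ) (hp : 2 ≤ p)
    (w : Fin p → EuclideanSpace ℝ (Fin N) → EuclideanSpace ℝ (Fin N))
    (lam : Fin p → ℝ)
    (hlam : ∀ j, lam j ∈ Set.Ioo (0 : ℝ) 1)
    (hsim : ∀ j x y, dist (w j x) (w j y) = lam j * dist x y)
    (s : ℝ) (hs : 0 < s)
    (hsum : ∑ j, lam j ^ s = 1) :
    ∃! μ : Measure (EuclideanSpace ℝ (Fin N)),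
      IsProbabilityMeasure μ ∧
      (∃ K : Set (EuclideanSpace ℝ (Fin N)), IsCompact K ∧ μ Kᶜ = 0) ∧
      μ = ∑ j, ENNReal.ofReal (lam j ^ s) • μ.map (w j) := by
  have hw (j : Fin p) : ContractingWith ⟨lam j, (hlam j).1.le⟩ (w j) :=
    ⟨(hlam j).2, .of_dist_le_mul fun x y => (hsim j x y).le⟩
  have hc : ∑ j, ENNReal.ofReal (lam j ^ s) = 1 := by
    rw [← ENNReal.ofReal_sum_of_nonneg fun j _ => Real.rpow_nonneg (hlam j).1.le s, hsum,
      ENNReal.ofReal_one]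
  obtain ⟨μ, hμ, hcompact, hinv, hunique⟩ := stmt_7_general hw hc
  exact ⟨μ, ⟨hμ, hcompact, hinv⟩, fun μ' ⟨hμ', _, hinv'⟩ => hunique μ' hμ' hinv'⟩
end

section
/- Let (μ_n)_{n≥1} be a nonincreasing sequence of positive real numbers converging to 0 such that lim_{n→∞} μ_n/μ_{2n} = ℓ ∈ (1,∞). Let μ(x) := μ_n for x ∈ [n,n+1) and f(t) := −log μ(e^t). Then lim_{h→∞} limsup_{t→∞} (f(t+h) − f(t))/h = lim_{h→∞} liminf_{t→∞} (f(t+h) − f(t))/h = (log ℓ)/(log 2); equivalently, c̲ = c̄ = (log 2)/(log ℓ) ∈ (0,∞). -/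
open Filter

/-- The (extended-real valued) `limsup_{t→∞} (f(t+h) − f(t))/h`. -/
noncomputable def limsupRatio (f : ℝ → ℝ) (h : ℝ) : EReal :=
  limsup (fun t : ℝ => (((f (t + h) - f t) / h : ℝ) : EReal)) atTop

/-- The (extended-real valued) `liminf_{t→∞} (f(t+h) − f(t))/h`. -/
noncomputable def liminfRatio (f : ℝ → ℝ) (h : ℝ) : EReal :=
  liminf (fun t : ℝ => (((f (t + h) - f t) / h : ℝ) : EReal)) atTop

/-- The function `f(t) = −log μ(e^t)` where `μ(x) = μ_n` for `x ∈ [n, n+1)`. -/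
noncomputable def fStep (μ : ℕ → ℝ) (t : ℝ) : ℝ :=
  -Real.log (μ ⌊Real.exp t⌋₊)

/-!
Put `g = -log μ`. Iterating the doubling hypothesis gives `g (2 ^ k * n) - g n → k log ℓ`. If
`2 ^ k ≤ e ^ h < 2 ^ (k + 1)`, then `⌊e ^ (t + h)⌋` lies between `2 ^ k ⌊e ^ t⌋` and
`2 ^ (k + 2) ⌊e ^ t⌋`, so by monotonicity `f (t + h) - f t` stays, for large `t`, within a constant
independent of `h` of `(log ℓ / log 2) h`. Dividing by `h` makes that constant negligible.
-/

lemma liminfRatio_le_limsupRatio (f : ℝ → ℝ) (h : ℝ) : liminfRatio f h ≤ limsupRatio f h :=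
  liminf_le_limsup

section Ratio

variable {f : ℝ → ℝ}

lemma coe_le_liminfRatio {a h : ℝ} (hf : ∀ᶠ t in atTop, a ≤ (f (t + h) - f t) / h) :
    (a : EReal) ≤ liminfRatio f h :=
  le_liminf_of_le (h := hf.mono fun _ ht => EReal.coe_le_coe ht)

lemma limsupRatio_le_coe {a h : ℝ} (hf : ∀ᶠ t in atTop, (f (t + h) - f t) / h ≤ a) :
    limsupRatio f h ≤ (a : EReal) :=
  limsup_le_of_le (h := hf.mono fun _ ht => EReal.coe_le_coe ht)

lemma tendsto_coe_add_div_atTop (c C : ℝ) :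
    Tendsto (fun h : ℝ => ((c + C / h : ℝ) : EReal)) atTop (nhds (c : EReal)) := by
  refine (continuous_coe_real_ereal.tendsto c).comp ?_
  simpa only [add_zero, id] using
    (tendsto_const_nhds (x := c)).add ((tendsto_const_nhds (x := C)).div_atTop tendsto_id)

theorem tendsto_limsupRatio_and_liminfRatio_of_abs_sub_le {c C : ℝ}
    (hf : ∀ᶠ h in atTop, ∀ᶠ t in atTop, |f (t + h) - f t - c * h| ≤ C) :
    Tendsto (limsupRatio f) atTop (nhds (c : EReal)) ∧
      Tendsto (liminfRatio f) atTop (nhds (c : EReal)) := by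
  have lower : ∀ᶠ h : ℝ in atTop, ((c + -C / h : ℝ) : EReal) ≤ liminfRatio f h := by
    filter_upwards [hf, eventually_gt_atTop 0] with h hfh hh
    refine coe_le_liminfRatio (hfh.mono fun t ht => ?_)
    rw [le_div_iff₀ hh, add_mul, div_mul_cancel₀ _ hh.ne']
    linarith [(abs_le.1 ht).1]
  have upper : ∀ᶠ h : ℝ in atTop, limsupRatio f h ≤ ((c + C / h : ℝ) : EReal) := by
    filter_upwards [hf, eventually_gt_atTop 0] with h hfh hh
    refine limsupRatio_le_coe (hfh.mono fun t ht => ?_)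
    rw [div_le_iff₀ hh, add_mul, div_mul_cancel₀ _ hh.ne']
    linarith [(abs_le.1 ht).2]
  have squeeze {u : ℝ → EReal} (hle : ∀ h, liminfRatio f h ≤ u h)
      (hge : ∀ h, u h ≤ limsupRatio f h) : Tendsto u atTop (nhds (c : EReal)) :=
    tendsto_of_tendsto_of_tendsto_of_le_of_le' (tendsto_coe_add_div_atTop c (-C))
      (tendsto_coe_add_div_atTop c C) (lower.mono fun h hh => hh.trans (hle h))
      (upper.mono fun h hh => (hge h).trans hh)
  exact ⟨squeeze (liminfRatio_le_limsupRatio f) fun _ => le_rfl,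
    squeeze (fun _ => le_rfl) (liminfRatio_le_limsupRatio f)⟩

end Ratio

section Floor

variable {x y : ℝ} {m b : ℕ}

lemma mul_floor_le_floor_mul (hx : 0 ≤ x) (hm : m ≤ y) : m * ⌊x⌋₊ ≤ ⌊x * y⌋₊ := by
  apply Nat.le_floor
  rw [Nat.cast_mul, mul_comm]
  exact mul_le_mul (Nat.floor_le hx) hm m.cast_nonneg hx

lemma floor_mul_le_mul_floor (hx : 1 ≤ x) (hm : y ≤ m) (hb : 1 < b) :
    ⌊x * y⌋₊ ≤ m * b * ⌊x⌋₊ := by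
  have x_le : x ≤ (b * ⌊x⌋₊ : ℕ) := calc
    x ≤ (⌊x⌋₊ + 1 : ℕ) := by exact_mod_cast (Nat.lt_floor_add_one x).le
    _ ≤ (b * ⌊x⌋₊ : ℕ) := by
      have : 1 ≤ ⌊x⌋₊ := Nat.floor_pos.2 hx
      exact_mod_cast (by nlinarith : ⌊x⌋₊ + 1 ≤ b * ⌊x⌋₊)
  apply Nat.floor_le_of_le
  calc x * y ≤ x * m := by gcongr
    _ ≤ (b * ⌊x⌋₊ : ℕ) * m := by gcongr
    _ = (m * b * ⌊x⌋₊ : ℕ) := by push_cast; ring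

end Floor

section GeometricIncrements

variable {g : ℕ → ℝ} {b : ℕ} {L : ℝ}

lemma tendsto_pow_mul_sub (hb : 0 < b)
    (hg : Tendsto (fun n => g (b * n) - g n) atTop (nhds L)) (k : ℕ) :
    Tendsto (fun n => g (b ^ k * n) - g n) atTop (nhds (k * L)) := by
  induction k with
  | zero => simp
  | succ k ih =>
    have pow_mul_atTop : Tendsto (fun n => b ^ k * n) atTop atTop :=
      tendsto_id.const_mul_atTop' (pow_pos hb k)
    convert (hg.comp pow_mul_atTop).add ih using 2 with n
    · simp only [Function.comp_apply, pow_succ', mul_assoc, sub_add_sub_cancel]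
    · push_cast; ring

lemma nonneg_of_tendsto_mul_sub (hb : 0 < b) (hmono : MonotoneOn g (Set.Ici 1))
    (hg : Tendsto (fun n => g (b * n) - g n) atTop (nhds L)) : 0 ≤ L := by
  refine ge_of_tendsto hg ?_
  filter_upwards [eventually_ge_atTop 1] with n hn
  have n_le : n ≤ b * n := Nat.le_mul_of_pos_left n hb
  exact sub_nonneg.2 (hmono hn (hn.trans n_le) n_le)

lemma eventually_sub_mem_Icc_of_mem_Icc (hb : 0 < b) (hmono : MonotoneOn g (Set.Ici 1))
    (hg : Tendsto (fun n => g (b * n) - g n) atTop (nhds L)) (j k : ℕ) :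
    ∀ᶠ n in atTop, ∀ m ∈ Set.Icc (b ^ j * n) (b ^ k * n),
      g m - g n ∈ Set.Icc (j * L - 1) (k * L + 1) := by
  filter_upwards [eventually_ge_atTop 1,
    (tendsto_pow_mul_sub hb hg j).eventually (eventually_ge_nhds (sub_one_lt _)),
    (tendsto_pow_mul_sub hb hg k).eventually (eventually_le_nhds (lt_add_one _))]
    with n hn lower upper m hm
  have one_le : 1 ≤ b ^ j * n := Nat.mul_pos (pow_pos hb j) hn
  have g_lower := hmono one_le (one_le.trans hm.1) hm.1
  have g_upper := hmono (one_le.trans hm.1) (one_le.trans (hm.1.trans hm.2)) hm.2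
  constructor <;> linarith

lemma exists_pow_le_exp_lt_pow_succ (hb : 1 < b) {h : ℝ} (hh : 0 ≤ h) :
    ∃ k : ℕ, ((b ^ k : ℕ) : ℝ) ≤ Real.exp h ∧ Real.exp h < (b ^ (k + 1) : ℕ) := by
  exact_mod_cast exists_nat_pow_near (Real.one_le_exp hh) (Nat.one_lt_cast.2 hb)

lemma div_log_mul_mem_Icc (hb : 1 < b) (hL : 0 ≤ L) {h : ℝ} {k : ℕ}
    (hk : ((b ^ k : ℕ) : ℝ) ≤ Real.exp h) (hk' : Real.exp h < (b ^ (k + 1) : ℕ)) :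
    L / Real.log b * h ∈ Set.Icc (k * L) ((k + 1) * L) := by
  have b_pos : (0 : ℝ) < b := by positivity
  have log_pos : 0 < Real.log b := Real.log_pos (Nat.one_lt_cast.2 hb)
  have le_h : k * Real.log b ≤ h := by
    rw [← Real.log_pow]
    exact (Real.log_le_iff_le_exp (pow_pos b_pos k)).2 (by exact_mod_cast hk)
  have h_le : h ≤ (k + 1) * Real.log b := by
    rw [← Nat.cast_succ, ← Real.log_pow]
    exact (Real.le_log_iff_exp_le (pow_pos b_pos _)).2 (by exact_mod_cast hk'.le)
  rw [div_mul_eq_mul_div, Set.mem_Icc, le_div_iff₀ log_pos, div_le_iff₀ log_pos]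
  constructor <;> nlinarith

lemma eventually_abs_floor_exp_sub_le (hb : 1 < b) (hmono : MonotoneOn g (Set.Ici 1))
    (hg : Tendsto (fun n => g (b * n) - g n) atTop (nhds L)) {h : ℝ} (hh : 0 ≤ h) :
    ∀ᶠ t in atTop,
      |g ⌊Real.exp (t + h)⌋₊ - g ⌊Real.exp t⌋₊ - L / Real.log b * h| ≤ 2 * L + 1 := by
  have b_pos : 0 < b := zero_lt_one.trans hb
  have L_nonneg : 0 ≤ L := nonneg_of_tendsto_mul_sub b_pos hmono hg
  obtain ⟨k, hk, hk'⟩ := exists_pow_le_exp_lt_pow_succ hb hh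
  obtain ⟨slope_lower, slope_upper⟩ := div_log_mul_mem_Icc hb L_nonneg hk hk'
  have floor_exp_atTop : Tendsto (fun t => ⌊Real.exp t⌋₊) atTop atTop :=
    tendsto_nat_floor_atTop.comp Real.tendsto_exp_atTop
  filter_upwards [eventually_ge_atTop 0, floor_exp_atTop.eventually
    (eventually_sub_mem_Icc_of_mem_Icc b_pos hmono hg k (k + 2))] with t ht increment
  have floor_mem : ⌊Real.exp (t + h)⌋₊ ∈
      Set.Icc (b ^ k * ⌊Real.exp t⌋₊) (b ^ (k + 2) * ⌊Real.exp t⌋₊) := by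
    rw [Real.exp_add]
    exact ⟨mul_floor_le_floor_mul (Real.exp_pos t).le hk,
      floor_mul_le_mul_floor (Real.one_le_exp ht) hk'.le hb⟩
  obtain ⟨lower, upper⟩ := increment _ floor_mem
  push_cast at upper
  rw [abs_le]
  constructor <;> linarith

theorem tendsto_limsupRatio_and_liminfRatio_floor_exp (hb : 1 < b)
    (hmono : MonotoneOn g (Set.Ici 1))
    (hg : Tendsto (fun n => g (b * n) - g n) atTop (nhds L)) :
    Tendsto (limsupRatio fun t => g ⌊Real.exp t⌋₊) atTop
        (nhds ((L / Real.log b : ℝ) : EReal)) ∧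
      Tendsto (liminfRatio fun t => g ⌊Real.exp t⌋₊) atTop
        (nhds ((L / Real.log b : ℝ) : EReal)) :=
  tendsto_limsupRatio_and_liminfRatio_of_abs_sub_le <|
    (eventually_ge_atTop 0).mono fun _ => eventually_abs_floor_exp_sub_le hb hmono hg

end GeometricIncrements

section PositiveSequence

variable {μ : ℕ → ℝ}

lemma monotoneOn_neg_log (hpos : ∀ n, 1 ≤ n → 0 < μ n)
    (hmono : ∀ m n, 1 ≤ m → m ≤ n → μ n ≤ μ m) :
    MonotoneOn (fun n => -Real.log (μ n)) (Set.Ici 1) :=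
  fun m hm n hn hmn => neg_le_neg (Real.log_le_log (hpos n hn) (hmono m n hm hmn))

lemma one_le_of_tendsto_div {b : ℕ} (hb : 0 < b) (hpos : ∀ n, 1 ≤ n → 0 < μ n)
    (hmono : ∀ m n, 1 ≤ m → m ≤ n → μ n ≤ μ m) {l : ℝ}
    (hratio : Tendsto (fun n : ℕ => μ n / μ (b * n)) atTop (nhds l)) : 1 ≤ l := by
  refine ge_of_tendsto hratio ?_
  filter_upwards [eventually_ge_atTop 1] with n hn
  have n_le : n ≤ b * n := Nat.le_mul_of_pos_left n hb
  exact (one_le_div (hpos _ (hn.trans n_le))).2 (hmono n _ hn n_le)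

lemma tendsto_neg_log_mul_sub {b : ℕ} (hb : 0 < b) (hne : ∀ᶠ n in atTop, μ n ≠ 0) {l : ℝ}
    (hl : l ≠ 0) (hratio : Tendsto (fun n : ℕ => μ n / μ (b * n)) atTop (nhds l)) :
    Tendsto (fun n => -Real.log (μ (b * n)) - -Real.log (μ n)) atTop (nhds (Real.log l)) := by
  have mul_atTop : Tendsto (fun n => b * n) atTop atTop := tendsto_id.const_mul_atTop' hb
  refine (hratio.log hl).congr' ?_
  filter_upwards [hne, mul_atTop.eventually hne] with n hn hbn
  rw [Real.log_div hn hbn]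
  ring

end PositiveSequence

theorem stmt_9_general {μ : ℕ → ℝ} (hpos : ∀ n, 1 ≤ n → 0 < μ n)
    (hmono : ∀ m n, 1 ≤ m → m ≤ n → μ n ≤ μ m) {b : ℕ} (hb : 1 < b) {l : ℝ}
    (hratio : Tendsto (fun n : ℕ => μ n / μ (b * n)) atTop (nhds l)) :
    Tendsto (limsupRatio (fStep μ)) atTop (nhds ((Real.log l / Real.log b : ℝ) : EReal)) ∧
      Tendsto (liminfRatio (fStep μ)) atTop (nhds ((Real.log l / Real.log b : ℝ) : EReal)) := by
  have b_pos : 0 < b := zero_lt_one.trans hb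
  have l_pos : 0 < l := zero_lt_one.trans_le (one_le_of_tendsto_div b_pos hpos hmono hratio)
  have μ_ne_zero : ∀ᶠ n in atTop, μ n ≠ 0 :=
    (eventually_ge_atTop 1).mono fun n hn => (hpos n hn).ne'
  exact tendsto_limsupRatio_and_liminfRatio_floor_exp (g := fun n => -Real.log (μ n)) hb
    (monotoneOn_neg_log hpos hmono) (tendsto_neg_log_mul_sub b_pos μ_ne_zero l_pos.ne' hratio)

/-- if `(μ_n)_{n≥1}` is nonincreasing, positive, converges to `0`, and
`μ_n/μ_{2n} → ℓ ∈ (1,∞)`, then with `f(t) = −log μ(e^t)` one has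
`lim_{h→∞} limsup_{t→∞} (f(t+h)−f(t))/h = lim_{h→∞} liminf_{t→∞} (f(t+h)−f(t))/h
  = (log ℓ)/(log 2)`;
equivalently `c̲ = c̄ = (log 2)/(log ℓ) ∈ (0,∞)`. -/
theorem stmt_9 (μ : ℕ → ℝ)
    (hpos : ∀ n, 1 ≤ n → 0 < μ n)
    (hmono : ∀ m n, 1 ≤ m → m ≤ n → μ n ≤ μ m)
    (hlim : Tendsto μ atTop (nhds 0))
    (l : ℝ) (hl : 1 < l)
    (hratio : Tendsto (fun n : ℕ => μ n / μ (2 * n)) atTop (nhds l)) :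
    Tendsto (fun h : ℝ => limsupRatio (fStep μ) h) atTop
      (nhds ((Real.log l / Real.log 2 : ℝ) : EReal)) ∧
    Tendsto (fun h : ℝ => liminfRatio (fStep μ) h) atTop
      (nhds ((Real.log l / Real.log 2 : ℝ) : EReal)) := by
  exact_mod_cast stmt_9_general hpos hmono one_lt_two hratio
end

section
/- Let (x_n)_{n≥0} be a strictly increasing sequence of positive integers with x_0 = 1 and x_n/x_{n+1} → 0 as n → ∞, and define μ_k := 1/x_n for x_{n−1} < k ≤ x_n. Then for every α > 1, lim_{n→∞} x_{n+1}^{α−1} Σ_{k = x_{n+1}+1}^∞ μ_k^α = 0. -/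
open Filter

/-!
Split the tail `∑_{k > x_n} μ_k ^ α` into the blocks `x_j < k ≤ x_{j+1}`, `j ≥ n`. A block has at
most `x_{j+1}` terms, all equal to `x_{j+1} ^ (-α)`, so the tail is at most `∑_{j > n} a_j` with
`a_j = x_j ^ (1 - α)`. Since `a_{j+1} / a_j = (x_j / x_{j+1}) ^ (α - 1) → 0`, the sequence `a`
decays faster than every geometric sequence, so `∑_{j > n} a_j` is negligible compared with `a_n`.
-/

open Asymptotics Finset

section RapidDecay

variable {E : Type*} [NormedAddCommGroup E] {a : ℕ → E}

lemma summable_of_succ_isLittleO [CompleteSpace E] (ha : (fun n ↦ a (n + 1)) =o[atTop] a) :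
    Summable a :=
  summable_of_ratio_norm_eventually_le one_half_lt_one (ha.bound one_half_pos)

lemma norm_tsum_tail_le_of_norm_succ_le {r : ℝ} (hr0 : 0 ≤ r) (hr1 : r < 1) {n : ℕ}
    (ha : ∀ m ≥ n, ‖a (m + 1)‖ ≤ r * ‖a m‖) :
    ‖∑' k, a (n + 1 + k)‖ ≤ (1 - r)⁻¹ * (r * ‖a n‖) := by
  refine tsum_of_norm_bounded ((hasSum_geometric_of_lt_one hr0 hr1).mul_right _) fun k ↦ ?_
  calc ‖a (n + 1 + k)‖ ≤ r ^ k * ‖a (n + 1)‖ :=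
        le_geom (u := fun k ↦ ‖a (n + 1 + k)‖) hr0 k fun j _ ↦ ha (n + 1 + j) (by lia)
    _ ≤ r ^ k * (r * ‖a n‖) := by gcongr; exact ha n le_rfl

lemma isLittleO_tsum_tail_of_succ_isLittleO (ha : (fun n ↦ a (n + 1)) =o[atTop] a) :
    (fun n ↦ ∑' k, a (n + 1 + k)) =o[atTop] a := by
  refine isLittleO_iff.2 fun c hc ↦ ?_
  -- `r = c / (1 + c)` solves `r / (1 - r) = c`.
  have hr0 : 0 < c / (1 + c) := by positivity
  have hr1 : c / (1 + c) < 1 := by rw [div_lt_one] <;> linarith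
  filter_upwards [eventually_forall_ge_atTop.2 (ha.bound hr0)] with n hn
  calc ‖∑' k, a (n + 1 + k)‖ ≤ (1 - c / (1 + c))⁻¹ * (c / (1 + c) * ‖a n‖) :=
        norm_tsum_tail_le_of_norm_succ_le hr0.le hr1 hn
    _ = c * ‖a n‖ := by
        have : 1 - c / (1 + c) = (1 + c)⁻¹ := by field_simp; ring
        rw [this]; field_simp

end RapidDecay

lemma isLittleO_inv_rpow {ι : Type*} {l : Filter ι} {u v : ι → ℝ} {p : ℝ} (hp : 0 < p)
    (hu : ∀ᶠ i in l, 0 < u i) (hv : 0 ≤ᶠ[l] v) (huv : u =o[l] v) :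
    (fun i ↦ (v i ^ p)⁻¹) =o[l] fun i ↦ (u i ^ p)⁻¹ :=
  (huv.rpow hp hv).inv_rev <| hu.mono fun _ hi h ↦ absurd h (Real.rpow_pos_of_pos hi p).ne'

section Blocks

variable {x : ℕ → ℕ}

lemma sum_range_sum_Ioc {M : Type*} [AddCommMonoid M] (hx : Monotone x) (f : ℕ → M) (n : ℕ) :
    ∑ j ∈ range n, ∑ k ∈ Ioc (x j) (x (j + 1)), f k = ∑ k ∈ Ioc (x 0) (x n), f k := by
  induction n with
  | zero => simp
  | succ n ih =>
    rw [sum_range_succ, ih, sum_Ioc_consecutive f (hx n.zero_le) (hx n.le_succ)]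

lemma norm_tsum_le_tsum_of_sum_Ioc_norm_le {E : Type*} [NormedAddCommGroup E] {f : ℕ → E}
    {b : ℕ → ℝ} (hx : Monotone x) (hx_top : Tendsto x atTop atTop) (hb : Summable b)
    (hfb : ∀ j, ∑ k ∈ Ioc (x j) (x (j + 1)), ‖f k‖ ≤ b j) :
    ‖∑' k, f (x 0 + 1 + k)‖ ≤ ∑' j, b j := by
  have hb0 (j : ℕ) : 0 ≤ b j := (sum_nonneg fun _ _ ↦ norm_nonneg _).trans (hfb j)
  have partial_sum_le (K : ℕ) : ∑ k ∈ range K, ‖f (x 0 + 1 + k)‖ ≤ ∑' j, b j := by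
    obtain ⟨n, hn⟩ := (hx_top.eventually_ge_atTop (x 0 + K)).exists
    calc ∑ k ∈ range K, ‖f (x 0 + 1 + k)‖ = ∑ k ∈ Ioc (x 0) (x 0 + K), ‖f k‖ := by
          rw [← Ico_add_one_add_one_eq_Ioc, sum_Ico_eq_sum_range]
          congr 2
          lia
      _ ≤ ∑ k ∈ Ioc (x 0) (x n), ‖f k‖ := by gcongr
      _ = ∑ j ∈ range n, ∑ k ∈ Ioc (x j) (x (j + 1)), ‖f k‖ := (sum_range_sum_Ioc hx _ n).symm
      _ ≤ ∑ j ∈ range n, b j := sum_le_sum fun j _ ↦ hfb j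
      _ ≤ ∑' j, b j := hb.sum_le_tsum _ fun j _ ↦ hb0 j
  have hf : Summable fun k ↦ ‖f (x 0 + 1 + k)‖ :=
    summable_of_sum_range_le (fun _ ↦ norm_nonneg _) partial_sum_le
  exact (norm_tsum_le_tsum_norm hf).trans (hf.tsum_le_of_sum_range_le partial_sum_le)

lemma sum_Ioc_norm_rpow_le {μ : ℕ → ℝ} {a b : ℕ} (hμ : ∀ k ∈ Ioc a b, μ k = 1 / b) (α : ℝ) :
    ∑ k ∈ Ioc a b, ‖μ k ^ α‖ ≤ ((b : ℝ) ^ (α - 1))⁻¹ := by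
  obtain rfl | hb := b.eq_zero_or_pos
  · simpa using Real.rpow_nonneg le_rfl _
  have hb' : (0 : ℝ) < b := mod_cast hb
  have norm_eq : ∀ k ∈ Ioc a b, ‖μ k ^ α‖ = ((b : ℝ) ^ α)⁻¹ := fun k hk ↦ by
    rw [hμ k hk, one_div, Real.inv_rpow hb'.le, Real.norm_of_nonneg (by positivity)]
  calc ∑ k ∈ Ioc a b, ‖μ k ^ α‖ = (b - a : ℕ) * ((b : ℝ) ^ α)⁻¹ := by
        rw [sum_congr rfl norm_eq, sum_const, Nat.card_Ioc, nsmul_eq_mul]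
    _ ≤ b * ((b : ℝ) ^ α)⁻¹ := by gcongr; exact b.sub_le a
    _ = ((b : ℝ) ^ (α - 1))⁻¹ := by rw [Real.rpow_sub_one hb'.ne', inv_div, div_eq_mul_inv]

lemma norm_tsum_tail_rpow_le {μ : ℕ → ℝ} {α : ℝ} (hx : Monotone x) (hx_top : Tendsto x atTop atTop)
    (hμ : ∀ j, ∀ k ∈ Ioc (x j) (x (j + 1)), μ k = 1 / x (j + 1))
    (hs : Summable fun j ↦ ((x j : ℝ) ^ (α - 1))⁻¹) (n : ℕ) :
    ‖∑' k, μ (x n + 1 + k) ^ α‖ ≤ ∑' j, ((x (n + 1 + j) : ℝ) ^ (α - 1))⁻¹ := by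
  have hshift : Monotone fun j ↦ x (n + j) := hx.comp fun _ _ h ↦ Nat.add_le_add_left h n
  have hshift_top : Tendsto (fun j ↦ x (n + j)) atTop atTop :=
    hx_top.comp (tendsto_atTop_mono (fun j ↦ Nat.le_add_left j n) tendsto_id)
  refine norm_tsum_le_tsum_of_sum_Ioc_norm_le (f := fun k ↦ μ k ^ α) hshift hshift_top
    (hs.comp_injective (add_right_injective (n + 1))) fun j ↦ ?_
  rw [add_right_comm n 1 j]
  exact sum_Ioc_norm_rpow_le (hμ (n + j)) α

end Blocks

/-- let `(x_n)_{n≥0}` be a strictly increasing sequence of positive integers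
with `x_0 = 1` and `x_n/x_{n+1} → 0`, and let `μ_k = 1/x_n` for `x_{n−1} < k ≤ x_n`. Then
for every `α > 1` one has `x_{n+1}^{α−1} Σ_{k > x_{n+1}} μ_k^α → 0` as `n → ∞`. -/
theorem stmt_16 (x : ℕ → ℕ) (hx0 : x 0 = 1) (hmono : StrictMono x)
    (hratio : Tendsto (fun n => (x n : ℝ) / (x (n + 1) : ℝ)) atTop (nhds 0))
    (μ : ℕ → ℝ)
    (hμ : ∀ n : ℕ, 1 ≤ n → ∀ k : ℕ, x (n - 1) < k → k ≤ x n → μ k = 1 / (x n : ℝ)) :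
    ∀ α : ℝ, 1 < α →
      Tendsto (fun n : ℕ =>
          (x (n + 1) : ℝ) ^ (α - 1) * ∑' k : ℕ, μ (x (n + 1) + 1 + k) ^ α)
        atTop (nhds 0) := by
  intro α hα
  have hpos (n : ℕ) : (0 : ℝ) < x n :=
    mod_cast (hx0 ▸ one_pos : 0 < x 0).trans_le (hmono.monotone n.zero_le)
  let a (n : ℕ) : ℝ := ((x n : ℝ) ^ (α - 1))⁻¹
  have succ_isLittleO : (fun n ↦ a (n + 1)) =o[atTop] a :=
    isLittleO_inv_rpow (sub_pos.2 hα) (.of_forall hpos) (.of_forall fun n ↦ (hpos (n + 1)).le) <|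
      isLittleO_of_tendsto (fun n h ↦ absurd h (hpos (n + 1)).ne') hratio
  have hblock (j k : ℕ) (hk : k ∈ Ioc (x j) (x (j + 1))) : μ k = 1 / x (j + 1) :=
    hμ (j + 1) j.succ_pos k (mem_Ioc.1 hk).1 (mem_Ioc.1 hk).2
  have norm_tail_le (n : ℕ) : ‖∑' k, μ (x n + 1 + k) ^ α‖ ≤ ∑' j, a (n + 1 + j) :=
    norm_tsum_tail_rpow_le hmono.monotone hmono.tendsto_atTop hblock
      (summable_of_succ_isLittleO succ_isLittleO) n
  have tail_isLittleO : (fun n ↦ ∑' k, μ (x n + 1 + k) ^ α) =o[atTop] a :=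
    (isBigO_of_le _ fun n ↦ (norm_tail_le n).trans (le_abs_self _)).trans_isLittleO
      (isLittleO_tsum_tail_of_succ_isLittleO succ_isLittleO)
  simpa only [a, Function.comp_def, div_inv_eq_mul, mul_comm] using
    tail_isLittleO.tendsto_div_nhds_zero.comp (tendsto_add_atTop_nat 1)
end

section
/- Let (x_n)_{n≥0} be a strictly increasing sequence of positive integers with x_0 = 1 and x_n/x_{n+1} → 0 as n → ∞, and define μ_k := 1/x_n for x_{n−1} < k ≤ x_n. Then for every α > 1, lim_{n→∞} (Σ_{k = 2x_n+1}^∞ μ_k^α)/(Σ_{k = x_n+1}^∞ μ_k^α) = 1; in particular the sequence (μ_k^α) is eccentric, so the trace-class operator with singular values μ_k^α is singularly traceable. -/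
open Filter

/-! If a sequence is constant on the block `(x_n, x_{n+1}]`, passing from the tail beyond `x_n` to
the tail beyond `2 x_n` removes `x_n` of the `x_{n+1} - x_n` equal terms of that block, which is at
most the fraction `x_n / (x_{n+1} - x_n) → 0` of the whole tail. The values taken on the blocks only
matter for summability, which follows from `μ_k ≤ 1 / k`. -/

open Set
open scoped Topology

/-- The tail `S_n = Σ_{k > n} ν_k` of a series, with the junk value `0` when `ν` is not summable. -/
noncomputable def tailSum (ν : ℕ → ℝ) (n : ℕ) : ℝ := ∑' k : ℕ, ν (n + 1 + k)

/-- Eccentricity of a sequence: the ratios `S_{2m} / S_m` of its tails tend to `1` along a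
subsequence. Summability and monotonicity of `ν` are not part of the definition. -/
def IsEccentric (ν : ℕ → ℝ) : Prop :=
  ∃ m : ℕ → ℕ, StrictMono m ∧
    Tendsto (fun j ↦ tailSum ν (2 * m j) / tailSum ν (m j)) atTop (𝓝 1)

section TailSum

variable {ν : ℕ → ℝ} {a : ℕ}

lemma summable_tail (hsum : Summable ν) (n : ℕ) : Summable fun k ↦ ν (n + 1 + k) :=
  hsum.comp_injective (add_right_injective (n + 1))

lemma tailSum_nonneg (hν : ∀ k, a < k → 0 ≤ ν k) : 0 ≤ tailSum ν a :=
  tsum_nonneg fun _ ↦ hν _ (by omega)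

lemma tailSum_pos (hsum : Summable ν) (hν : ∀ k, a < k → 0 < ν k) : 0 < tailSum ν a :=
  (summable_tail hsum a).tsum_pos (fun _ ↦ (hν _ (by omega)).le) 0 (hν _ (by omega))

lemma sum_range_add_tailSum (hsum : Summable ν) (a m : ℕ) :
    ∑ k ∈ Finset.range m, ν (a + 1 + k) + tailSum ν (a + m) = tailSum ν a := by
  have hshift : tailSum ν (a + m) = ∑' k, ν (a + 1 + (k + m)) :=
    tsum_congr fun k ↦ congrArg ν (by ring)
  rw [hshift]
  exact (summable_tail hsum a).sum_add_tsum_nat_add m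

lemma tailSum_add_le (hsum : Summable ν) (hν : ∀ k, a < k → 0 ≤ ν k) (m : ℕ) :
    tailSum ν (a + m) ≤ tailSum ν a := by
  rw [← sum_range_add_tailSum hsum a m]
  exact le_add_of_nonneg_left (Finset.sum_nonneg fun _ _ ↦ hν _ (by omega))

lemma mul_add_tailSum_of_const {m : ℕ} {c : ℝ} (hsum : Summable ν)
    (hconst : ∀ k ∈ Ioc a (a + m), ν k = c) :
    m * c + tailSum ν (a + m) = tailSum ν a := by
  have hblock : ∑ k ∈ Finset.range m, ν (a + 1 + k) = m * c := by
    rw [Finset.sum_congr rfl fun k hk ↦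
      hconst _ ⟨by omega, by have := Finset.mem_range.1 hk; omega⟩]
    simp
  rw [← hblock, sum_range_add_tailSum hsum]

lemma one_sub_div_mul_tailSum_le {m L : ℕ} {c : ℝ} (hsum : Summable ν)
    (hν : ∀ k, a < k → 0 ≤ ν k) (hL : 0 < L) (hmL : m ≤ L)
    (hconst : ∀ k ∈ Ioc a (a + L), ν k = c) :
    (1 - m / L : ℝ) * tailSum ν a ≤ tailSum ν (a + m) := by
  have hblock : L * c ≤ tailSum ν a := by
    rw [← mul_add_tailSum_of_const hsum hconst]
    exact le_add_of_nonneg_right (tailSum_nonneg fun k hk ↦ hν k (by omega))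
  have hremoved : m * c + tailSum ν (a + m) = tailSum ν a :=
    mul_add_tailSum_of_const hsum fun k hk ↦ hconst k ⟨hk.1, hk.2.trans (by omega)⟩
  have hfraction : m * c ≤ (m / L : ℝ) * tailSum ν a :=
    calc m * c = (m / L : ℝ) * (L * c) := by field_simp
      _ ≤ (m / L : ℝ) * tailSum ν a := by gcongr
  linarith

lemma tailSum_add_div_tailSum_mem_Icc {m L : ℕ} {c : ℝ} (hsum : Summable ν)
    (hν : ∀ k, a < k → 0 < ν k) (hL : 0 < L) (hmL : m ≤ L)
    (hconst : ∀ k ∈ Ioc a (a + L), ν k = c) :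
    tailSum ν (a + m) / tailSum ν a ∈ Icc (1 - m / L : ℝ) 1 := by
  have hnonneg : ∀ k, a < k → 0 ≤ ν k := fun k hk ↦ (hν k hk).le
  have hpos : 0 < tailSum ν a := tailSum_pos hsum hν
  exact ⟨(le_div_iff₀ hpos).2 (one_sub_div_mul_tailSum_le hsum hnonneg hL hmL hconst),
    (div_le_one hpos).2 (tailSum_add_le hsum hnonneg m)⟩

end TailSum

section Blocks

variable {x : ℕ → ℕ} {μ : ℕ → ℝ}

lemma tendsto_div_sub_of_tendsto_div_succ (hmono : StrictMono x)
    (hratio : Tendsto (fun n ↦ (x n : ℝ) / x (n + 1)) atTop (𝓝 0)) :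
    Tendsto (fun n ↦ (x n : ℝ) / (x (n + 1) - x n : ℕ)) atTop (𝓝 0) := by
  have hquot : Tendsto (fun n ↦ (x n / x (n + 1) : ℝ) / (1 - x n / x (n + 1))) atTop (𝓝 0) := by
    simpa only [sub_zero, zero_div] using! hratio.div (hratio.const_sub 1) (by norm_num)
  refine hquot.congr fun n ↦ ?_
  have hlt : x n < x (n + 1) := hmono n.lt_succ_self
  have hne : (x (n + 1) : ℝ) ≠ 0 := by exact_mod_cast (Nat.zero_le _).trans_lt hlt |>.ne'
  rw [Nat.cast_sub hlt.le, one_sub_div hne, div_div_div_cancel_right₀ hne]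

theorem tendsto_tailSum_two_mul_div_tailSum (hmono : StrictMono x)
    (hratio : Tendsto (fun n ↦ (x n : ℝ) / x (n + 1)) atTop (𝓝 0))
    {ν c : ℕ → ℝ} (hsum : Summable ν) (hν : ∀ k, x 0 < k → 0 < ν k)
    (hconst : ∀ n, ∀ k ∈ Ioc (x n) (x (n + 1)), ν k = c n) :
    Tendsto (fun n ↦ tailSum ν (2 * x n) / tailSum ν (x n)) atTop (𝓝 1) := by
  have hfraction := tendsto_div_sub_of_tendsto_div_succ hmono hratio
  have hbounds : ∀ᶠ n in atTop, tailSum ν (2 * x n) / tailSum ν (x n) ∈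
      Icc (1 - x n / (x (n + 1) - x n : ℕ) : ℝ) 1 := by
    filter_upwards [hfraction.eventually_le_const one_pos] with n hn
    have hlt : x n < x (n + 1) := hmono n.lt_succ_self
    have hL : 0 < x (n + 1) - x n := Nat.sub_pos_of_lt hlt
    have hle : x n ≤ x (n + 1) - x n := by
      exact_mod_cast (div_le_one (Nat.cast_pos.2 hL)).1 hn
    rw [two_mul]
    refine tailSum_add_div_tailSum_mem_Icc (c := c n) hsum
      (fun k hk ↦ hν k ((hmono.monotone n.zero_le).trans_lt hk)) hL hle ?_
    rw [Nat.add_sub_cancel' hlt.le]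
    exact hconst n
  exact tendsto_of_tendsto_of_tendsto_of_le_of_le' (by simpa using hfraction.const_sub 1)
    tendsto_const_nhds (hbounds.mono fun _ h ↦ h.1) (hbounds.mono fun _ h ↦ h.2)

lemma mem_Ioc_zero_one_div_of_eq_one_div_on_blocks (hmono : StrictMono x)
    (hμ : ∀ n, ∀ k ∈ Ioc (x n) (x (n + 1)), μ k = 1 / x (n + 1))
    {k : ℕ} (hk : x 0 < k) :
    μ k ∈ Ioc (0 : ℝ) (1 / k) := by
  obtain ⟨n, hn⟩ : ∃ n, x n < k ∧ k ≤ x (n + 1) :=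
    hmono.exists_between_of_tendsto_atTop hmono.tendsto_atTop hk
  have hkpos : (0 : ℝ) < k := by exact_mod_cast (Nat.zero_le _).trans_lt hk
  have hkx : (k : ℝ) ≤ x (n + 1) := by exact_mod_cast hn.2
  rw [hμ n k hn]
  exact ⟨one_div_pos.2 (hkpos.trans_le hkx), one_div_le_one_div_of_le hkpos hkx⟩

lemma summable_rpow_of_eq_one_div_on_blocks (hmono : StrictMono x)
    (hμ : ∀ n, ∀ k ∈ Ioc (x n) (x (n + 1)), μ k = 1 / x (n + 1))
    {α : ℝ} (hα : 1 < α) :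
    Summable fun k ↦ μ k ^ α := by
  refine .of_norm_bounded_eventually_nat (Real.summable_one_div_nat_rpow.2 hα) ?_
  filter_upwards [eventually_gt_atTop (x 0)] with k hk
  obtain ⟨hpos, hle⟩ := mem_Ioc_zero_one_div_of_eq_one_div_on_blocks hmono hμ hk
  calc ‖μ k ^ α‖ = μ k ^ α := Real.norm_of_nonneg (Real.rpow_nonneg hpos.le α)
    _ ≤ (1 / k : ℝ) ^ α := by gcongr
    _ = 1 / (k : ℝ) ^ α := by rw [Real.div_rpow zero_le_one k.cast_nonneg, Real.one_rpow]

end Blocks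

theorem stmt_17_general {x : ℕ → ℕ} (hmono : StrictMono x)
    (hratio : Tendsto (fun n ↦ (x n : ℝ) / x (n + 1)) atTop (𝓝 0))
    {ν c : ℕ → ℝ} (hsum : Summable ν) (hν : ∀ k, x 0 < k → 0 < ν k)
    (hconst : ∀ n, ∀ k ∈ Ioc (x n) (x (n + 1)), ν k = c n) :
    Tendsto (fun n ↦ tailSum ν (2 * x n) / tailSum ν (x n)) atTop (𝓝 1) ∧ IsEccentric ν :=
  have hlim := tendsto_tailSum_two_mul_div_tailSum hmono hratio hsum hν hconst
  ⟨hlim, x, hmono, hlim⟩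

/-- let `(x_n)_{n≥0}` be a strictly increasing sequence of positive integers
with `x_0 = 1` and `x_n/x_{n+1} → 0`, and let `μ_k = 1/x_n` for `x_{n−1} < k ≤ x_n`. Then
for every `α > 1` the tails `S^{(α)}_m = Σ_{k>m} μ_k^α` satisfy
`S^{(α)}_{2x_n}/S^{(α)}_{x_n} → 1`; in particular `(μ_k^α)` is eccentric, i.e. the tails
ratio `S^{(α)}_{2m}/S^{(α)}_m` tends to `1` along some strictly increasing sequence. -/
theorem stmt_17 (x : ℕ → ℕ) (hx0 : x 0 = 1) (hmono : StrictMono x)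
    (hratio : Tendsto (fun n => (x n : ℝ) / (x (n + 1) : ℝ)) atTop (nhds 0))
    (μ : ℕ → ℝ)
    (hμ : ∀ n : ℕ, 1 ≤ n → ∀ k : ℕ, x (n - 1) < k → k ≤ x n → μ k = 1 / (x n : ℝ)) :
    ∀ α : ℝ, 1 < α →
      Tendsto (fun n : ℕ =>
          (∑' k : ℕ, μ (2 * x n + 1 + k) ^ α) / (∑' k : ℕ, μ (x n + 1 + k) ^ α))
        atTop (nhds 1) ∧
      ∃ nj : ℕ → ℕ, StrictMono nj ∧
        Tendsto (fun j : ℕ =>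
            (∑' k : ℕ, μ (2 * nj j + 1 + k) ^ α) / (∑' k : ℕ, μ (nj j + 1 + k) ^ α))
          atTop (nhds 1) := by
  intro α hα
  have hblock : ∀ n, ∀ k ∈ Ioc (x n) (x (n + 1)), μ k = 1 / x (n + 1) :=
    fun n k hk ↦ hμ (n + 1) n.succ_pos k hk.1 hk.2
  have hpos : ∀ k, x 0 < k → 0 < μ k ^ α := fun k hk ↦
    Real.rpow_pos_of_pos (mem_Ioc_zero_one_div_of_eq_one_div_on_blocks hmono hblock hk).1 α
  exact stmt_17_general hmono hratio (summable_rpow_of_eq_one_div_on_blocks hmono hblock hα) hpos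
    fun n k hk ↦ congrArg (· ^ α) (hblock n k hk)
end

section
/- Let (b_n)_{n≥0} be a strictly increasing sequence of nonnegative reals with b_0 = 0 and b_{n+1} − b_n → ∞, and define f(t) := b_n for b_{n−1} < t ≤ b_n. Then: (i) lim_{h→∞} liminf_{t→∞} (f(t+h) − f(t))/h = 0; (ii) for every h > 0, limsup_{t→∞} (f(t+h) − f(t))/h = +∞ (hence lim_{h→∞} limsup_{t→∞} (f(t+h) − f(t))/h = +∞); (iii) liminf_{t→∞} f(t)/t = 1. Equivalently, for the associated operator c̲ = 0, c̄ = ∞ and ord = 1. -/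
open Filter

/-- The step function `f(t) = b_n` for `b_{n−1} < t ≤ b_n`: `f t = b (least n with t ≤ b n)`. -/
noncomputable def fStair (b : ℕ → ℝ) (t : ℝ) : ℝ :=
  b (sInf {n : ℕ | t ≤ b n})

/-!
On the step `(b n, b (n + 1)]` the function `f = fStair b` is constantly `b (n + 1)`, and these
steps get arbitrarily long. A window of length `h` ending at `b (n + 1)` therefore sees no increase,
whereas one starting at `b n` sees the whole jump `b (n + 1) - b n`. Finally `t ≤ f t`, with
equality at `t = b n`.

The indices `n` used are those for which `b n` exceeds every earlier term; a sequence tending to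
`∞` has infinitely many of them, and at these the step above really occurs.
-/

theorem tendsto_atTop_of_tendsto_sub_atTop {G : Type*} [AddCommGroup G] [PartialOrder G]
    [IsOrderedAddMonoid G] {u : ℕ → G} (hgap : Tendsto (fun n => u (n + 1) - u n) atTop atTop) :
    Tendsto u atTop atTop := by
  obtain ⟨N, hN⟩ := eventually_atTop.mp (hgap.eventually_ge_atTop 0)
  have hmono : MonotoneOn u (Set.Ici N) :=
    monotoneOn_nat_Ici_of_le_succ fun n hn => sub_nonneg.mp (hN n hn)
  have hbelow : ∀ᶠ n in atTop, u N ≤ u n :=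
    (eventually_ge_atTop N).mono fun n hn => hmono Set.self_mem_Ici hn hn
  rw [← tendsto_add_atTop_iff_nat 1]
  simpa only [add_sub_cancel] using tendsto_atTop_add_left_of_le' atTop (u N) hbelow hgap

theorem liminfRatio_nonneg {f : ℝ → ℝ} (hf : Monotone f) {h : ℝ} (hh : 0 ≤ h) :
    0 ≤ liminfRatio f h :=
  le_liminf_of_le (by isBoundedDefault) <| .of_forall fun t =>
    EReal.coe_nonneg.mpr <| div_nonneg (sub_nonneg.mpr <| hf <| le_add_of_nonneg_right hh) hh

section fStair

variable {b : ℕ → ℝ}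

theorem fStair_eq_of_forall_lt {n : ℕ} {t : ℝ} (hbefore : ∀ m < n, b m < t) (ht : t ≤ b n) :
    fStair b t = b n := by
  have hleast : IsLeast {k | t ≤ b k} n :=
    ⟨ht, fun k hk => not_lt.mp fun hkn => (hbefore k hkn).not_ge hk⟩
  rw [fStair, hleast.csInf_eq]

theorem fStair_eq_succ {n : ℕ} {t : ℝ} (hrecord : ∀ m < n, b m < b n) (hlt : b n < t)
    (hle : t ≤ b (n + 1)) : fStair b t = b (n + 1) := by
  refine fStair_eq_of_forall_lt (fun m hm => ?_) hle
  rcases Nat.lt_succ_iff_lt_or_eq.mp hm with hmn | rfl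
  · exact (hrecord m hmn).trans hlt
  · exact hlt

theorem le_fStair (hb : ¬BddAbove (Set.range b)) (t : ℝ) : t ≤ fStair b t := by
  obtain ⟨_, ⟨n, rfl⟩, hn⟩ := not_bddAbove_iff.mp hb t
  exact Nat.sInf_mem (s := {n | t ≤ b n}) ⟨n, hn.le⟩

theorem monotone_fStair (hb : ¬BddAbove (Set.range b)) : Monotone (fStair b) := by
  intro s t hst
  have hindex : sInf {n | s ≤ b n} ≤ sInf {n | t ≤ b n} :=
    Nat.sInf_le (hst.trans (le_fStair hb t))
  rcases hindex.eq_or_lt with heq | hlt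
  · exact (congrArg b heq).le
  · have hbefore : fStair b s < t := not_le.mp (Nat.notMem_of_lt_sInf hlt)
    exact hbefore.le.trans (le_fStair hb t)

theorem liminfRatio_fStair_eq_zero (hgap : Tendsto (fun n => b (n + 1) - b n) atTop atTop)
    {h : ℝ} (hh : 0 < h) : liminfRatio (fStair b) h = 0 := by
  have hb := tendsto_atTop_of_tendsto_sub_atTop hgap
  have hends : Tendsto (fun n => b (n + 1) - h) atTop atTop :=
    tendsto_atTop_add_const_right _ (-h) ((tendsto_add_atTop_iff_nat 1).mpr hb)
  refine le_antisymm (liminf_le_of_frequently_le (hends.frequently ?_))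
    (liminfRatio_nonneg (monotone_fStair (not_bddAbove_of_tendsto_atTop hb)) hh.le)
  refine ((frequently_high_scores hb).and_eventually (hgap.eventually_gt_atTop h)).mono ?_
  rintro n ⟨hrecord, hlong⟩
  have hleft : fStair b (b (n + 1) - h) = b (n + 1) :=
    fStair_eq_succ hrecord (by linarith) (by linarith)
  have hright : fStair b (b (n + 1)) = b (n + 1) :=
    fStair_eq_succ hrecord (by linarith) le_rfl
  simp [hleft, hright]

theorem limsupRatio_fStair_eq_top (hgap : Tendsto (fun n => b (n + 1) - b n) atTop atTop)
    {h : ℝ} (hh : 0 < h) : limsupRatio (fStair b) h = ⊤ := by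
  have hb := tendsto_atTop_of_tendsto_sub_atTop hgap
  refine top_unique <| EReal.ge_of_forall_gt_iff_ge.mp fun C _ => ?_
  refine le_limsup_of_frequently_le (hb.frequently ?_)
  have hjump := (hgap.eventually_ge_atTop h).and (hgap.eventually_ge_atTop (C * h))
  refine ((frequently_high_scores hb).and_eventually hjump).mono ?_
  rintro n ⟨hrecord, hlong, hlarge⟩
  have hleft : fStair b (b n) = b n := fStair_eq_of_forall_lt hrecord le_rfl
  have hright : fStair b (b n + h) = b (n + 1) :=
    fStair_eq_succ hrecord (by linarith) (by linarith)
  rw [hleft, hright, EReal.coe_le_coe_iff]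
  exact (le_div_iff₀ hh).mpr hlarge

theorem liminf_fStair_div_self (hb : Tendsto b atTop atTop) :
    liminf (fun t : ℝ => ((fStair b t / t : ℝ) : EReal)) atTop = 1 := by
  apply le_antisymm
  · refine liminf_le_of_frequently_le (hb.frequently ?_)
    refine ((frequently_high_scores hb).and_eventually (hb.eventually_gt_atTop 0)).mono ?_
    rintro n ⟨hrecord, hpos⟩
    rw [fStair_eq_of_forall_lt hrecord le_rfl, div_self hpos.ne', EReal.coe_one]
  · refine le_liminf_of_le (by isBoundedDefault) ?_
    filter_upwards [eventually_gt_atTop 0] with t ht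
    have hle : t ≤ fStair b t := le_fStair (not_bddAbove_of_tendsto_atTop hb) t
    exact_mod_cast (one_le_div₀ ht).mpr hle

end fStair

theorem stmt_19_general (b : ℕ → ℝ)
    (hgap : Tendsto (fun n => b (n + 1) - b n) atTop atTop) :
    Tendsto (fun h : ℝ => liminfRatio (fStair b) h) atTop (nhds (0 : EReal)) ∧
    (∀ h : ℝ, 0 < h → limsupRatio (fStair b) h = (⊤ : EReal)) ∧
    Tendsto (fun h : ℝ => limsupRatio (fStair b) h) atTop (nhds (⊤ : EReal)) ∧
    liminf (fun t : ℝ => ((fStair b t / t : ℝ) : EReal)) atTop = (1 : EReal) := by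
  have hpos : ∀ᶠ h : ℝ in atTop, 0 < h := eventually_gt_atTop 0
  exact ⟨tendsto_nhds_of_eventually_eq (hpos.mono fun _ => liminfRatio_fStair_eq_zero hgap),
    fun _ => limsupRatio_fStair_eq_top hgap,
    tendsto_nhds_of_eventually_eq (hpos.mono fun _ => limsupRatio_fStair_eq_top hgap),
    liminf_fStair_div_self (tendsto_atTop_of_tendsto_sub_atTop hgap)⟩

/-- let `(b_n)` be strictly increasing nonnegative reals with `b_0 = 0` and
`b_{n+1} − b_n → ∞`, and `f(t) = b_n` for `b_{n−1} < t ≤ b_n`. Then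
(i) `lim_{h→∞} liminf_{t→∞} (f(t+h)−f(t))/h = 0`;
(ii) `limsup_{t→∞} (f(t+h)−f(t))/h = +∞` for every `h > 0`, hence
`lim_{h→∞} limsup_{t→∞} (f(t+h)−f(t))/h = +∞`;
(iii) `liminf_{t→∞} f(t)/t = 1`. Equivalently `c̲ = 0`, `c̄ = ∞` and `ord = 1`. -/
theorem stmt_19 (b : ℕ → ℝ) (hb0 : b 0 = 0) (hnonneg : ∀ n, 0 ≤ b n) (hmono : StrictMono b)
    (hgap : Tendsto (fun n => b (n + 1) - b n) atTop atTop) :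
    Tendsto (fun h : ℝ => liminfRatio (fStair b) h) atTop (nhds (0 : EReal)) ∧
    (∀ h : ℝ, 0 < h → limsupRatio (fStair b) h = (⊤ : EReal)) ∧
    Tendsto (fun h : ℝ => limsupRatio (fStair b) h) atTop (nhds (⊤ : EReal)) ∧
    liminf (fun t : ℝ => ((fStair b t / t : ℝ) : EReal)) atTop = (1 : EReal) :=
  stmt_19_general b hgap
end
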